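/- Let G be a two-player Hanoi omega-game whose winning condition Acc is a Rabin condition, and let P_G be the associated classical turn-based game with winning condition Acc'. If Player Out has a winning strategy in P_G, then Player Out has a super-memoryless winning strategy: there exists, for each state q of the underlying automaton, a linear order ≤_q on the state set Q such that the memoryless strategy which, from every Player-Out vertex (q,S), moves to the ≤_q-minimal element of S, is winning for Player Out in P_G. -/

import Mathlib

/-!
In `P_G`, a super-memoryless strategy is the same thing as a choice, at each state `q`, of a set
`Y q` meeting every `q`-good set: an order that ranks `Y q` first makes the minimum of every good
set fall into `Y q` (`exists_order_of_outMem`). So consider the game in which Out names a hitting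
set `Y` at `q` and In then picks the next state in `Y`. A winning strategy of Out in `P_G`, with
whatever memory, also beats In there, because its answers to the various good sets at a given
history form a hitting set (`not_inMem_of_winning`).

It remains to see that Out has a memoryless winning strategy in the set-choosing game unless In
wins (`outMem_or_inMem`). This goes by induction on Out's options. With a single option
everywhere, either all paths are accepted or In follows a rejected one. Otherwise split the
options at some state `v` into two parts. If In wins from `u` for both parts, then either she also
wins from `v` for the second part, and she interleaves the two strategies (`inMem_merge`), or her
strategy for the second part must avoid `v`, and the split is irrelevant (`inMem_avoid`). The
interleaving is winning because the colors seen infinitely often along it are those seen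
infinitely often along its two components, and the complement of a Rabin condition is closed
under such unions (`not_rabinAcc_of_shuffle`).
-/

/-- Boolean formulas over a set of atomic propositions `P`. -/
inductive BForm (P : Type) : Type
  | tt : BForm P
  | var : P → BForm P
  | not : BForm P → BForm P
  | and : BForm P → BForm P → BForm P
  | or : BForm P → BForm P → BForm P

/-- Satisfaction of a Boolean formula by a valuation `v : P → Bool`. -/
def BForm.sat {P : Type} (v : P → Bool) : BForm P → Bool
  | .tt => true
  | .var p => v p
  | .not φ => !(BForm.sat v φ)
  | .and φ ψ => BForm.sat v φ && BForm.sat v ψ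
  | .or φ ψ => BForm.sat v φ || BForm.sat v ψ

/-- A transition of a Hanoi omega-automaton: source, Boolean guard, color, destination. -/
structure Edge (Q P : Type) (d : ℕ) where
  src : Q
  guard : BForm P
  color : Fin d
  dst : Q

/-- A Hanoi omega-automaton with state set `Q`, atomic propositions `P` and index `d`:
an initial-state set and a set of guarded colored transitions. -/
structure HOA (Q P : Type) (d : ℕ) where
  I : Set Q
  Δ : Set (Edge Q P d)

/-- An infinite run: consecutive transitions of the automaton. -/
def IsRun {Q P : Type} {d : ℕ} (A : HOA Q P d) (ρ : ℕ → Edge Q P d) : Prop :=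
  (∀ n, ρ n ∈ A.Δ) ∧ ∀ n, (ρ n).dst = (ρ (n + 1)).src

/-- `w ⊨ ρ` : every letter of the word satisfies the corresponding guard. -/
def WordSat {Q P : Type} {d : ℕ} (w : ℕ → P → Bool) (ρ : ℕ → Edge Q P d) : Prop :=
  ∀ n, ((ρ n).guard).sat (w n) = true

/-- The color sequence of a run. -/
def colorSeq {Q P : Type} {d : ℕ} (ρ : ℕ → Edge Q P d) : ℕ → Fin d :=
  fun n => (ρ n).color

/-- The language of a Hanoi omega-automaton for acceptance condition `Acc ⊆ [d]^ω`. -/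
def Lang {Q P : Type} {d : ℕ} (A : HOA Q P d) (Acc : Set (ℕ → Fin d)) :
    Set (ℕ → P → Bool) :=
  {w | ∃ ρ, IsRun A ρ ∧ (ρ 0).src ∈ A.I ∧ colorSeq ρ ∈ Acc ∧ WordSat w ρ}

/-- State-based coloring: all transitions leaving the same state have the same color. -/
def StateBased {Q P : Type} {d : ℕ} (A : HOA Q P d) : Prop :=
  ∀ t ∈ A.Δ, ∀ t' ∈ A.Δ, t.src = t'.src → t.color = t'.color

/-- Symbols occurring infinitely often in an infinite sequence. -/
def OccInf {C : Type} (s : ℕ → C) : Set C := {c | ∀ N, ∃ n, N ≤ n ∧ s n = c}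

/-- Symbols occurring, but only finitely often, in an infinite sequence. -/
def OccFin {C : Type} (s : ℕ → C) : Set C := Set.range s \ OccInf s

/-- A round of a Hanoi omega-game: a valuation of the input propositions chosen by
Player In together with a valuation of the output propositions chosen by Player Out. -/
abbrev GRound (Pi Po : Type) := (Pi → Bool) × (Po → Bool)

/-- A strategy of Player In: from a history of rounds, choose an input valuation. -/
abbrev InStrat (Pi Po : Type) := List (GRound Pi Po) → (Pi → Bool)

/-- A strategy of Player Out: from a history of rounds and the input valuation just
chosen by Player In, choose an output valuation. -/
abbrev OutStrat (Pi Po : Type) := List (GRound Pi Po) → (Pi → Bool) → (Po → Bool)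

/-- The history of the first `n` rounds of the play induced by a pair of strategies. -/
def gHist {Pi Po : Type} (σi : InStrat Pi Po) (σo : OutStrat Pi Po) :
    ℕ → List (GRound Pi Po)
  | 0 => []
  | n + 1 =>
      gHist σi σo n ++
        [(σi (gHist σi σo n), σo (gHist σi σo n) (σi (gHist σi σo n)))]

/-- The `n`-th round of the play induced by a pair of strategies. -/
def gPlay {Pi Po : Type} (σi : InStrat Pi Po) (σo : OutStrat Pi Po) (n : ℕ) :
    GRound Pi Po :=
  (σi (gHist σi σo n), σo (gHist σi σo n) (σi (gHist σi σo n)))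

/-- The ω-word over `Val(P_in ⊎ P_out)` obtained from the induced play. -/
def gWord {Pi Po : Type} (σi : InStrat Pi Po) (σo : OutStrat Pi Po) :
    ℕ → (Pi ⊕ Po) → Bool :=
  fun n => Sum.elim (gPlay σi σo n).1 (gPlay σi σo n).2

/-- The automaton is complete and deterministic: from every state, every valuation
satisfies the guard of exactly one transition. -/
def CompleteDet {Q P : Type} {d : ℕ} (A : HOA Q P d) : Prop :=
  ∀ (q : Q) (v : P → Bool), ∃! t, t ∈ A.Δ ∧ t.src = q ∧ t.guard.sat v = true

/-- Player Out's strategy is winning: whatever Player In does, the resulting play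
belongs to the language of the automaton. -/
def OutWinning {Q Pi Po : Type} {d : ℕ} (A : HOA Q (Pi ⊕ Po) d)
    (Acc : Set (ℕ → Fin d)) (σo : OutStrat Pi Po) : Prop :=
  ∀ σi : InStrat Pi Po, gWord σi σo ∈ Lang A Acc

/-- Player In's strategy is winning: whatever Player Out does, the resulting play does
not belong to the language of the automaton. -/
def InWinning {Q Pi Po : Type} {d : ℕ} (A : HOA Q (Pi ⊕ Po) d)
    (Acc : Set (ℕ → Fin d)) (σi : InStrat Pi Po) : Prop :=
  ∀ σo : OutStrat Pi Po, gWord σi σo ∉ Lang A Acc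

/-- The step relation of the automaton: `q` goes to `q'` on valuation `v`. -/
def HStep {Q P : Type} {d : ℕ} (A : HOA Q P d) (q : Q) (v : P → Bool) (q' : Q) : Prop :=
  ∃ t ∈ A.Δ, t.src = q ∧ t.guard.sat v = true ∧ t.dst = q'

/-- `S` is `q`-good: Player In can choose an input valuation so that, whatever output
valuation Player Out chooses, the successor of `q` lands in `S`. -/
def qGood {Q Pi Po : Type} {d : ℕ} (A : HOA Q (Pi ⊕ Po) d) (q : Q) (S : Set Q) : Prop :=
  ∃ vi : Pi → Bool, ∀ vo : Po → Bool, ∃ q' ∈ S, HStep A q (Sum.elim vi vo) q'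

/-- A strategy of Player In in the classical game `P_G`: from a history of rounds
(each round being the set chosen by In together with the state chosen by Out),
choose the next set. -/
abbrev PGIn (Q : Type) := List (Set Q × Q) → Set Q

/-- A strategy of Player Out in the classical game `P_G`: from a history of rounds and
the set just chosen by Player In, choose the next state. -/
abbrev PGOut (Q : Type) := List (Set Q × Q) → Set Q → Q

/-- The history of the first `n` rounds of the play of `P_G` induced by a pair of
strategies. -/
def pgHist {Q : Type} (τi : PGIn Q) (τo : PGOut Q) : ℕ → List (Set Q × Q)
  | 0 => []
  | n + 1 =>
      pgHist τi τo n ++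
        [(τi (pgHist τi τo n), τo (pgHist τi τo n) (τi (pgHist τi τo n)))]

/-- The `n`-th round of the play of `P_G` induced by a pair of strategies. -/
def pgRound {Q : Type} (τi : PGIn Q) (τo : PGOut Q) (n : ℕ) : Set Q × Q :=
  (τi (pgHist τi τo n), τo (pgHist τi τo n) (τi (pgHist τi τo n)))

/-- The `Q`-state visited at the beginning of round `n` of the play of `P_G`. -/
def pgState {Q : Type} (q₀ : Q) (τi : PGIn Q) (τo : PGOut Q) : ℕ → Q
  | 0 => q₀
  | n + 1 => (pgRound τi τo n).2

/-- Interleave the fresh color `0` (modeled as `none`) between the colors of a color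
sequence: `c₁ 0 c₂ 0 ⋯`. -/
def interleave0 {d : ℕ} (s : ℕ → Fin d) : ℕ → Option (Fin d) :=
  fun n => if n % 2 = 0 then some (s (n / 2)) else none

/-- The winning condition `Acc' = { c₁ 0 c₂ 0 ⋯ ∣ c₁ c₂ ⋯ ∈ Acc }` of `P_G`. -/
def AccP {d : ℕ} (Acc : Set (ℕ → Fin d)) : Set (ℕ → Option (Fin d)) :=
  {t | ∃ s ∈ Acc, t = interleave0 s}

/-- The color sequence of a play of `P_G` (state colors interleaved with the fresh
color `0` on Player-Out vertices). -/
def pgColors {Q : Type} {d : ℕ} (CS : Q → Fin d) (q₀ : Q) (τi : PGIn Q) (τo : PGOut Q) :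
    ℕ → Option (Fin d) :=
  interleave0 (fun n => CS (pgState q₀ τi τo n))

/-- Player Out's strategy is winning in `P_G`: against any strategy of Player In that
always picks good sets, Player Out's moves stay inside the chosen sets and the color
sequence of the play lies in `Acc'`. -/
def PGOutWinning {Q Pi Po : Type} {d : ℕ} (A : HOA Q (Pi ⊕ Po) d) (q₀ : Q)
    (CS : Q → Fin d) (Acc : Set (ℕ → Fin d)) (τo : PGOut Q) : Prop :=
  ∀ τi : PGIn Q,
    (∀ n, qGood A (pgState q₀ τi τo n) (pgRound τi τo n).1) →
    ((∀ n, (pgRound τi τo n).2 ∈ (pgRound τi τo n).1) ∧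
      pgColors CS q₀ τi τo ∈ AccP Acc)

/-- Player In's strategy is winning in `P_G`: against any strategy of Player Out that
always moves inside the chosen sets, Player In's sets are always good and the color
sequence of the play does not lie in `Acc'`. -/
def PGInWinning {Q Pi Po : Type} {d : ℕ} (A : HOA Q (Pi ⊕ Po) d) (q₀ : Q)
    (CS : Q → Fin d) (Acc : Set (ℕ → Fin d)) (τi : PGIn Q) : Prop :=
  ∀ τo : PGOut Q,
    (∀ n, (pgRound τi τo n).2 ∈ (pgRound τi τo n).1) →
    ((∀ n, qGood A (pgState q₀ τi τo n) (pgRound τi τo n).1) ∧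
      pgColors CS q₀ τi τo ∉ AccP Acc)

/-- Rabin acceptance for a list of pairs `(Eᵢ, Fᵢ)`: `⋁ᵢ (Inf(Eᵢ) ∧ Fin(Fᵢ))`. -/
def RabinAcc {d : ℕ} (pairs : List (Set (Fin d) × Set (Fin d))) : Set (ℕ → Fin d) :=
  {s | ∃ p ∈ pairs, (∃ c ∈ p.1, c ∈ OccInf s) ∧ ∀ c ∈ p.2, c ∉ OccInf s}

/-- The current `Q`-state after a history of rounds of `P_G`. -/
def curState {Q : Type} (q₀ : Q) (h : List (Set Q × Q)) : Q :=
  match h.getLast? with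
  | none => q₀
  | some r => r.2

/-! ### Sequences and the Rabin condition -/

theorem occInf_shift {C : Type} (s : ℕ → C) (k : ℕ) :
    OccInf (fun n => s (k + n)) = OccInf s := by
  ext c
  constructor
  · intro h N
    obtain ⟨n, hn, e⟩ := h N
    exact ⟨k + n, by omega, e⟩
  · intro h N
    obtain ⟨n, hn, e⟩ := h (k + N)
    refine ⟨n - k, by omega, ?_⟩
    have : k + (n - k) = n := by omega
    simpa [this] using e

theorem rabinAcc_shift {d : ℕ} (pairs : List (Set (Fin d) × Set (Fin d)))
    (s : ℕ → Fin d) (k : ℕ) :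
    (fun n => s (k + n)) ∈ RabinAcc pairs ↔ s ∈ RabinAcc pairs := by
  simp only [RabinAcc, Set.mem_ofPred_eq, occInf_shift]

/-- The complement of a Rabin condition (a Streett condition) is closed under shuffles: if the
times `{n | b n = i}` carry, whenever there are infinitely many of them, a rejected sequence
(`i = true, false`), then the whole sequence is rejected. -/
theorem not_rabinAcc_of_shuffle {d : ℕ} (pairs : List (Set (Fin d) × Set (Fin d)))
    (s : ℕ → Fin d) (b : ℕ → Bool)
    (h : ∀ i, (Set.ofPred fun n => b n = i).Infinite →
      (fun k => s (Nat.nth (fun n => b n = i) k)) ∉ RabinAcc pairs) :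
    s ∉ RabinAcc pairs := by
  rintro ⟨p, hp, ⟨c, hc, hcs⟩, hF⟩
  -- `c` recurs at infinitely many times with the same value `i` of `b`.
  obtain ⟨i, hi⟩ : ∃ i, ∀ N, ∃ n, N ≤ n ∧ s n = c ∧ b n = i := by
    by_contra! hcon
    obtain ⟨N₁, h₁⟩ := hcon true
    obtain ⟨N₂, h₂⟩ := hcon false
    obtain ⟨n, hn, e⟩ := hcs (max N₁ N₂)
    have h₁ := h₁ n (le_trans (le_max_left _ _) hn) e
    have h₂ := h₂ n (le_trans (le_max_right _ _) hn) e
    cases hb : b n <;> simp_all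
  have hinf : (Set.ofPred fun n => b n = i).Infinite := by
    rw [Set.infinite_iff_exists_gt]
    intro N
    obtain ⟨n, hn, -, e⟩ := hi (N + 1)
    exact ⟨n, e, by omega⟩
  refine h i hinf ⟨p, hp, ⟨c, hc, ?_⟩, ?_⟩
  · intro N
    obtain ⟨n, hn, e, eb⟩ := hi (Nat.nth (fun n => b n = i) N)
    obtain ⟨k, hk⟩ : ∃ k, Nat.nth (fun n => b n = i) k = n := by
      have : n ∈ Set.range (Nat.nth (fun n => b n = i)) := by
        rw [Nat.range_nth_of_infinite hinf]; exact eb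
      exact this
    refine ⟨k, ?_, by simpa [hk] using e⟩
    rw [← hk] at hn
    exact (Nat.nth_le_nth hinf).1 hn
  · intro f hf hfs
    refine hF f hf fun N => ?_
    obtain ⟨k, hk, e⟩ := hfs N
    exact ⟨_, le_trans hk ((Nat.nth_strictMono hinf).le_apply), e⟩

/-! ### Memoryless determinacy of the set-choosing game -/

/-- In the game where Out picks a set `Y ∈ G q` at `q` and In answers with the next state in `Y`:
Out wins from `q` with the fixed choice `Y p` at every state `p`. -/
def OutMem {Q : Type} {d : ℕ} (CS : Q → Fin d) (pairs : List (Set (Fin d) × Set (Fin d)))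
    (G : Q → Set (Set Q)) (q : Q) : Prop :=
  ∃ Y : Q → Set Q, (∀ p, Y p ∈ G p) ∧
    ∀ x : ℕ → Q, x 0 = q → (∀ n, x (n + 1) ∈ Y (x n)) → (fun n => CS (x n)) ∈ RabinAcc pairs

/-- In wins the set-choosing game from `q`. A strategy with memory is encoded as a graph `E` on a
type `M` of memory states located over `Q` by `loc`: each set offered by Out is answered along
some edge, and no infinite path, from any starting point, is accepted. -/
def InMem {Q : Type} {d : ℕ} (CS : Q → Fin d) (pairs : List (Set (Fin d) × Set (Fin d)))
    (G : Q → Set (Set Q)) (q : Q) : Prop :=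
  ∃ (M : Type) (loc : M → Q) (E : M → M → Prop), (∃ m, loc m = q) ∧
    (∀ m, ∀ Y ∈ G (loc m), ∃ m', E m m' ∧ loc m' ∈ Y) ∧
    ∀ x : ℕ → M, (∀ n, E (x n) (x (n + 1))) → (fun n => CS (loc (x n))) ∉ RabinAcc pairs

/-- If In wins from `u` with Out's options restricted to `G₁`, and from `v` with them restricted
to `G₂`, and the restrictions only concern `v`, then In wins from `u` in the unrestricted game:
she runs both strategies, suspending each one at `v` while Out's choices belong to the other. -/
theorem inMem_merge {Q : Type} {d : ℕ} (CS : Q → Fin d)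
    (pairs : List (Set (Fin d) × Set (Fin d))) (G G₁ G₂ : Q → Set (Set Q)) (u v : Q)
    (hne₁ : ∀ q, q ≠ v → G q ⊆ G₁ q) (hne₂ : ∀ q, q ≠ v → G q ⊆ G₂ q)
    (hv : G v ⊆ G₁ v ∪ G₂ v)
    (h₁ : InMem CS pairs G₁ u) (h₂ : InMem CS pairs G₂ v) : InMem CS pairs G u := by
  obtain ⟨M₁, l₁, E₁, ⟨m₁, hm₁⟩, r₁, w₁⟩ := h₁
  obtain ⟨M₂, l₂, E₂, ⟨m₂, hm₂⟩, r₂, w₂⟩ := h₂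
  -- The Boolean records which strategy moved last; the other one is suspended at `v`.
  let Inv : M₁ × M₂ × Bool → Prop := fun m => if m.2.2 then l₂ m.2.1 = v else l₁ m.1 = v
  let L : M₁ × M₂ × Bool → Q := fun m => if m.2.2 then l₁ m.1 else l₂ m.2.1
  let E : M₁ × M₂ × Bool → M₁ × M₂ × Bool → Prop := fun m m' =>
    if m'.2.2 then E₁ m.1 m'.1 ∧ m'.2.1 = m.2.1 ∧ l₁ m.1 = L m
    else E₂ m.2.1 m'.2.1 ∧ m'.1 = m.1 ∧ l₂ m.2.1 = L m
  refine ⟨{m // Inv m}, fun m => L m, fun m m' => E m m',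
    ⟨⟨(m₁, m₂, true), by simpa [Inv] using hm₂⟩, by simpa [L] using hm₁⟩, ?_, ?_⟩
  · rintro ⟨⟨a, b, i⟩, hi⟩ Y hY
    have go₁ : l₁ a = L (a, b, i) → l₂ b = v → Y ∈ G₁ (l₁ a) →
        ∃ m' : {m // Inv m}, E (a, b, i) m' ∧ L m' ∈ Y := by
      intro ha hb hY
      obtain ⟨a', ea, ha'⟩ := r₁ a Y hY
      exact ⟨⟨(a', b, true), by simpa [Inv] using hb⟩, by simp [E, ea, ha], by simpa [L] using ha'⟩
    have go₂ : l₂ b = L (a, b, i) → l₁ a = v → Y ∈ G₂ (l₂ b) →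
        ∃ m' : {m // Inv m}, E (a, b, i) m' ∧ L m' ∈ Y := by
      intro hb ha hY
      obtain ⟨b', eb, hb'⟩ := r₂ b Y hY
      exact ⟨⟨(a, b', false), by simpa [Inv] using ha⟩, by simp [E, eb, hb], by simpa [L] using hb'⟩
    cases i with
    | true =>
      have hb : l₂ b = v := by simpa [Inv] using hi
      have hY : Y ∈ G (l₁ a) := by simpa [L] using hY
      by_cases ha : l₁ a = v
      · rcases hv (ha ▸ hY) with h | h
        · exact go₁ (by simp [L]) hb (by rw [ha]; exact h)
        · exact go₂ (by simp [L, ha, hb]) ha (by rw [hb]; exact h)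
      · exact go₁ (by simp [L]) hb (hne₁ _ ha hY)
    | false =>
      have ha : l₁ a = v := by simpa [Inv] using hi
      have hY : Y ∈ G (l₂ b) := by simpa [L] using hY
      by_cases hb : l₂ b = v
      · rcases hv (hb ▸ hY) with h | h
        · exact go₁ (by simp [L, ha, hb]) hb (by rw [ha]; exact h)
        · exact go₂ (by simp [L]) ha (by rw [hb]; exact h)
      · exact go₂ (by simp [L]) ha (hne₂ _ hb hY)
  · intro x hx
    refine not_rabinAcc_of_shuffle pairs _ (fun n => (x (n + 1)).1.2.2) ?_
    -- A coordinate that changes only at the times in `p` is, at each such time, what it was right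
    -- after the previous one.
    have stay : ∀ {X : Type} (f : ℕ → X) (p : ℕ → Prop) (hp : (Set.ofPred p).Infinite),
        (∀ n, ¬ p n → f (n + 1) = f n) →
        ∀ k, f (Nat.nth p (k + 1)) = f (Nat.nth p k + 1) := by
      intro X f p hp hf k
      have hlt : Nat.nth p k + 1 ≤ Nat.nth p (k + 1) := (Nat.nth_lt_nth hp).2 (Nat.lt_succ_self k)
      have key : ∀ j, Nat.nth p k + 1 + j ≤ Nat.nth p (k + 1) →
          f (Nat.nth p k + 1 + j) = f (Nat.nth p k + 1) := by
        intro j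
        induction j with
        | zero => intro _; rfl
        | succ j ih =>
          intro hj
          rw [← ih (by omega), ← add_assoc]
          refine hf _ fun hpj => ?_
          obtain ⟨i, hi⟩ : Nat.nth p k + 1 + j ∈ Set.range (Nat.nth p) := by
            rw [Nat.range_nth_of_infinite hp]; exact hpj
          have h2 : k < i := (Nat.nth_lt_nth hp).1 (by omega)
          have h3 : i < k + 1 := (Nat.nth_lt_nth hp).1 (by omega)
          omega
      have := key (Nat.nth p (k + 1) - (Nat.nth p k + 1)) (by omega)
      rwa [Nat.add_sub_cancel' hlt] at this
    rintro (_ | _) hinf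
    · have hmem := fun k => Nat.nth_mem_of_infinite hinf k
      have hst := stay (fun n => (x n).1.2.1) _ hinf (fun n hn => by
        have := hx n
        simp only [Bool.not_eq_false] at hn
        simp only [E, hn, if_true] at this
        exact this.2.1)
      have hE : ∀ k, E₂ (x (Nat.nth (fun n => (x (n + 1)).1.2.2 = false) k)).1.2.1
            (x (Nat.nth (fun n => (x (n + 1)).1.2.2 = false) k + 1)).1.2.1 ∧
          l₂ (x (Nat.nth (fun n => (x (n + 1)).1.2.2 = false) k)).1.2.1 =
            L (x (Nat.nth (fun n => (x (n + 1)).1.2.2 = false) k)).1 := by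
        intro k
        have := hx (Nat.nth (fun n => (x (n + 1)).1.2.2 = false) k)
        simp only [E, hmem k, Bool.false_eq_true, if_false] at this
        exact ⟨this.1, this.2.2⟩
      have := w₂ (fun k => (x (Nat.nth (fun n => (x (n + 1)).1.2.2 = false) k)).1.2.1)
        (fun k => by rw [hst k]; exact (hE k).1)
      simpa only [fun k => (hE k).2] using this
    · have hmem := fun k => Nat.nth_mem_of_infinite hinf k
      have hst := stay (fun n => (x n).1.1) _ hinf (fun n hn => by
        have := hx n
        simp only [Bool.not_eq_true] at hn
        simp only [E, hn, Bool.false_eq_true, if_false] at this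
        exact this.2.1)
      have hE : ∀ k, E₁ (x (Nat.nth (fun n => (x (n + 1)).1.2.2 = true) k)).1.1
            (x (Nat.nth (fun n => (x (n + 1)).1.2.2 = true) k + 1)).1.1 ∧
          l₁ (x (Nat.nth (fun n => (x (n + 1)).1.2.2 = true) k)).1.1 =
            L (x (Nat.nth (fun n => (x (n + 1)).1.2.2 = true) k)).1 := by
        intro k
        have := hx (Nat.nth (fun n => (x (n + 1)).1.2.2 = true) k)
        simp only [E, hmem k, if_true] at this
        exact ⟨this.1, this.2.2⟩
      have := w₁ (fun k => (x (Nat.nth (fun n => (x (n + 1)).1.2.2 = true) k)).1.1)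
        (fun k => by rw [hst k]; exact (hE k).1)
      simpa only [fun k => (hE k).2] using this

/-- If Out wins from `v` when her options are `G'`, then a strategy of In against `G'` never
visits `v`, so it also works for options `G` that exceed `G'` at `v` only. -/
theorem inMem_avoid {Q : Type} {d : ℕ} (CS : Q → Fin d)
    (pairs : List (Set (Fin d) × Set (Fin d))) (G G' : Q → Set (Set Q)) (u v : Q)
    (hne : ∀ q, q ≠ v → G q ⊆ G' q)
    (hin : InMem CS pairs G' u) (hout : OutMem CS pairs G' v) : InMem CS pairs G u := by
  obtain ⟨M, l, E, ⟨m₀, hm₀⟩, r, w⟩ := hin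
  obtain ⟨Y, hY, hwin⟩ := hout
  have hav : ∀ m, l m ≠ v := by
    intro m hm
    choose f hf using fun m => r m (Y (l m)) (hY _)
    let x : ℕ → M := fun n => f^[n] m
    have hx : ∀ n, x (n + 1) = f (x n) := fun n => Function.iterate_succ_apply' f n m
    refine w x (fun n => by rw [hx]; exact (hf _).1) (hwin (fun n => l (x n)) hm fun n => ?_)
    simp only [hx]
    exact (hf _).2
  exact ⟨M, l, E, ⟨m₀, hm₀⟩, fun m Z hZ => r m Z (hne _ (hav m) hZ), w⟩

/-- Determinacy of the set-choosing game, with memoryless strategies for Out, by induction on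
her options `G`. -/
theorem outMem_or_inMem {Q : Type} [Finite Q] {d : ℕ} (CS : Q → Fin d)
    (pairs : List (Set (Fin d) × Set (Fin d))) (G : Q → Set (Set Q))
    (hG : ∀ q, (G q).Nonempty) (u : Q) : OutMem CS pairs G u ∨ InMem CS pairs G u := by
  classical
  induction G using WellFoundedLT.induction generalizing u with
  | ind G ih =>
  by_cases hsub : ∀ q, (G q).Subsingleton
  · choose Y hY using hG
    by_cases hall : ∀ x : ℕ → Q, x 0 = u → (∀ n, x (n + 1) ∈ Y (x n)) →
        (fun n => CS (x n)) ∈ RabinAcc pairs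
    · exact Or.inl ⟨Y, hY, hall⟩
    · push Not at hall
      obtain ⟨s, hs0, hs, hbad⟩ := hall
      refine Or.inr ⟨ℕ, s, fun n m => m = n + 1, ⟨0, hs0⟩, ?_, ?_⟩
      · intro n Z hZ
        refine ⟨n + 1, rfl, ?_⟩
        rw [hsub _ hZ (hY _)]
        exact hs n
      · intro x hx
        have hxn : ∀ n, x n = x 0 + n := by
          intro n
          induction n with
          | zero => rfl
          | succ n ihn => rw [hx, ihn]; rfl
        have := (rabinAcc_shift pairs (fun n => CS (s n)) (x 0)).not.2 hbad
        simpa only [← hxn] using this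
  · simp only [Set.Subsingleton, not_forall] at hsub
    obtain ⟨v, Y₁, hY₁, Y₂, hY₂, hne⟩ := hsub
    let G₁ : Q → Set (Set Q) := Function.update G v {Y₁}
    let G₂ : Q → Set (Set Q) := Function.update G v (G v \ {Y₁})
    have e₁ : ∀ q, q ≠ v → G₁ q = G q := fun q h => Function.update_of_ne h _ _
    have e₂ : ∀ q, q ≠ v → G₂ q = G q := fun q h => Function.update_of_ne h _ _
    have v₁ : G₁ v = {Y₁} := Function.update_self ..
    have v₂ : G₂ v = G v \ {Y₁} := Function.update_self ..
    have s₁ : ∀ q, G₁ q ⊆ G q := by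
      intro q
      by_cases h : q = v
      · subst h; rw [v₁]; simpa using hY₁
      · rw [e₁ q h]
    have s₂ : ∀ q, G₂ q ⊆ G q := by
      intro q
      by_cases h : q = v
      · subst h; rw [v₂]; exact Set.sdiff_subset
      · rw [e₂ q h]
    have lt₁ : G₁ < G := by
      refine lt_of_le_of_ne s₁ fun h => hne ?_
      have : Y₂ ∈ G₁ v := by rw [h]; exact hY₂
      rw [v₁] at this
      exact this.symm
    have lt₂ : G₂ < G := by
      refine lt_of_le_of_ne s₂ fun h => ?_
      have : Y₁ ∈ G₂ v := by rw [h]; exact hY₁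
      rw [v₂] at this
      exact this.2 rfl
    have n₁ : ∀ q, (G₁ q).Nonempty := by
      intro q
      by_cases h : q = v
      · subst h; rw [v₁]; exact ⟨_, rfl⟩
      · rw [e₁ q h]; exact hG q
    have n₂ : ∀ q, (G₂ q).Nonempty := by
      intro q
      by_cases h : q = v
      · subst h; rw [v₂]; exact ⟨Y₂, hY₂, fun h => hne h.symm⟩
      · rw [e₂ q h]; exact hG q
    rcases ih G₁ lt₁ n₁ u with ⟨Y, hY, hw⟩ | i₁
    · exact Or.inl ⟨Y, fun p => s₁ p (hY p), hw⟩
    rcases ih G₂ lt₂ n₂ u with ⟨Y, hY, hw⟩ | i₂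
    · exact Or.inl ⟨Y, fun p => s₂ p (hY p), hw⟩
    right
    rcases ih G₂ lt₂ n₂ v with o | j
    · exact inMem_avoid CS pairs G G₂ u v (fun q h => (e₂ q h).ge) i₂ o
    · refine inMem_merge CS pairs G G₁ G₂ u v (fun q h => (e₁ q h).ge)
        (fun q h => (e₂ q h).ge) (fun Z hZ => ?_) i₁ j
      rw [v₁, v₂]
      by_cases h : Z = Y₁
      · exact Or.inl h
      · exact Or.inr ⟨hZ, h⟩

/-! ### Transfer to the game `P_G` -/

/-- The sets of successors to which Out can confine the next state of `P_G` at `q`: those that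
meet every `q`-good set. -/
def hitting {Q Pi Po : Type} {d : ℕ} (A : HOA Q (Pi ⊕ Po) d) (q : Q) : Set (Set Q) :=
  {Y | ∀ S, qGood A q S → (Y ∩ S).Nonempty}

theorem curState_append {Q : Type} (q₀ : Q) (h : List (Set Q × Q)) (r : Set Q × Q) :
    curState q₀ (h ++ [r]) = r.2 := by
  simp [curState]

theorem pgState_eq_curState {Q : Type} (q₀ : Q) (τi : PGIn Q) (τo : PGOut Q) (n : ℕ) :
    pgState q₀ τi τo n = curState q₀ (pgHist τi τo n) := by
  cases n with
  | zero => rfl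
  | succ n => rw [pgHist, curState_append]; rfl

theorem interleave0_injective {d : ℕ} {s t : ℕ → Fin d} (h : interleave0 s = interleave0 t) :
    s = t := by
  funext n
  have := congrFun h (2 * n)
  simpa [interleave0] using this

/-- A winning strategy of Out in `P_G`, even with memory, excludes a winning strategy of In in
the game where Out picks hitting sets: at each history, the answers of Out's strategy to the
good sets form a hitting set, to which In's strategy has a reply. -/
theorem not_inMem_of_winning {Q Pi Po : Type} {d : ℕ} (A : HOA Q (Pi ⊕ Po) d) (q₀ : Q)
    (CS : Q → Fin d) (pairs : List (Set (Fin d) × Set (Fin d)))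
    (hgood : ∀ q, qGood A q Set.univ) (τo : PGOut Q)
    (hτ : PGOutWinning A q₀ CS (RabinAcc pairs) τo) :
    ¬ InMem CS pairs (hitting A) q₀ := by
  rintro ⟨M, l, E, ⟨m₀, hm₀⟩, r, w⟩
  -- An illegal answer of `τo` to a good set, if there is one, is provoked at once.
  have step : ∀ (h : List (Set Q × Q)) (m : M), ∃ (S : Set Q) (m' : M),
      qGood A (curState q₀ h) S ∧
        (τo h S ∈ S → l m = curState q₀ h → E m m' ∧ l m' = τo h S) := by
    intro h m
    by_cases hill : ∃ S, qGood A (curState q₀ h) S ∧ τo h S ∉ S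
    · obtain ⟨S, hS, hn⟩ := hill
      exact ⟨S, m, hS, fun h => absurd h hn⟩
    push Not at hill
    by_cases hm : l m = curState q₀ h
    · obtain ⟨m', hE, S, hS, e⟩ := r m {p | ∃ S, qGood A (curState q₀ h) S ∧ τo h S = p} (by
        rw [hm]
        exact fun S hS => ⟨τo h S, ⟨S, hS, rfl⟩, hill S hS⟩)
      exact ⟨S, m', hS, fun _ _ => ⟨hE, e.symm⟩⟩
    · exact ⟨Set.univ, m, hgood _, fun _ h => absurd h hm⟩
  choose f g hf hfg using step
  let z : ℕ → List (Set Q × Q) × M := fun n => Nat.rec ([], m₀)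
    (fun _ y => (y.1 ++ [(f y.1 y.2, τo y.1 (f y.1 y.2))], g y.1 y.2)) n
  have hz : ∀ n, z (n + 1) = ((z n).1 ++ [(f (z n).1 (z n).2, τo (z n).1 (f (z n).1 (z n).2))],
    g (z n).1 (z n).2) := fun n => rfl
  have hlen : ∀ n, (z n).1.length = n := by
    intro n
    induction n with
    | zero => rfl
    | succ n ih => rw [hz]; simp [ih]
  let τi : PGIn Q := fun h => f (z h.length).1 (z h.length).2
  have hτi : ∀ n, τi (z n).1 = f (z n).1 (z n).2 := fun n => by simp only [τi, hlen]
  have hhist : ∀ n, pgHist τi τo n = (z n).1 := by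
    intro n
    induction n with
    | zero => rfl
    | succ n ih => rw [pgHist, ih, hτi, hz]
  have hround : ∀ n, pgRound τi τo n =
      (f (z n).1 (z n).2, τo (z n).1 (f (z n).1 (z n).2)) := fun n => by
    rw [pgRound, hhist, hτi]
  obtain ⟨hin, s, hs, he⟩ := hτ τi (fun n => by
    rw [pgState_eq_curState, hhist, hround]; exact hf _ _)
  have hloc : ∀ n, l (z n).2 = curState q₀ (z n).1 := by
    intro n
    induction n with
    | zero => exact hm₀
    | succ n ih =>
      have := hin n
      rw [hround] at this
      rw [hz, curState_append]
      exact (hfg _ _ this ih).2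
  refine w (fun n => (z n).2) (fun n => ?_) ?_
  · have := hin n
    rw [hround] at this
    rw [hz]
    exact (hfg _ _ this (hloc n)).1
  · have e := interleave0_injective he
    rw [← e] at hs
    simpa only [hloc, ← hhist, ← pgState_eq_curState] using hs

theorem exists_order_of_outMem {Q Pi Po : Type} [Fintype Q] {d : ℕ}
    (A : HOA Q (Pi ⊕ Po) d) (q₀ : Q) (CS : Q → Fin d)
    (pairs : List (Set (Fin d) × Set (Fin d)))
    (hout : OutMem CS pairs (hitting A) q₀) :
    ∃ (r : Q → Q → Q → Prop) (τo : PGOut Q),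
      (∀ q : Q, IsLinearOrder Q (r q)) ∧
      (∀ (h : List (Set Q × Q)) (S : Set Q), S.Nonempty →
        τo h S ∈ S ∧ ∀ p ∈ S, r (curState q₀ h) (τo h S) p) ∧
      PGOutWinning A q₀ CS (RabinAcc pairs) τo := by
  classical
  obtain ⟨Y, hY, hwin⟩ := hout
  -- The order at `q` ranks the elements of `Y q` below all others.
  let key : Q → Q → ℕ := fun q p =>
    (Fintype.equivFin Q p : ℕ) + if p ∈ Y q then 0 else Fintype.card Q
  have hinj : ∀ q, Function.Injective (key q) := by
    intro q a b hab
    have ha := (Fintype.equivFin Q a).2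
    have hb := (Fintype.equivFin Q b).2
    have hab : (Fintype.equivFin Q a : ℕ) + (if a ∈ Y q then 0 else Fintype.card Q) =
      (Fintype.equivFin Q b : ℕ) + (if b ∈ Y q then 0 else Fintype.card Q) := hab
    apply (Fintype.equivFin Q).injective
    apply Fin.ext
    split_ifs at hab <;> omega
  have hlow : ∀ q a b, b ∈ Y q → key q a ≤ key q b → a ∈ Y q := by
    intro q a b hb hab
    by_contra ha
    have hb' := (Fintype.equivFin Q b).2
    simp only [key, hb, ha, if_true, if_false] at hab
    omega
  have hmin : ∀ (h : List (Set Q × Q)) (S : Set Q), ∃ p, S.Nonempty →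
      p ∈ S ∧ ∀ p' ∈ S, key (curState q₀ h) p ≤ key (curState q₀ h) p' := by
    intro h S
    by_cases hS : S.Nonempty
    · obtain ⟨p, hp, hp'⟩ := Set.exists_min_image S (key (curState q₀ h)) S.toFinite hS
      exact ⟨p, fun _ => ⟨hp, hp'⟩⟩
    · exact ⟨q₀, fun h => absurd h hS⟩
  choose τo hτo using hmin
  refine ⟨fun q a b => key q a ≤ key q b, τo, fun q => ?_, hτo, ?_⟩
  · exact
      { refl := fun a => le_rfl
        trans := fun a b c => le_trans
        antisymm := fun a b h h' => hinj q (le_antisymm h h')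
        total := fun a b => le_total _ _ }
  · intro τi hg
    have hstep : ∀ n, (pgRound τi τo n).2 ∈ (pgRound τi τo n).1 ∧
        (pgRound τi τo n).2 ∈ Y (pgState q₀ τi τo n) := by
      intro n
      obtain ⟨p, hpY, hpS⟩ := hY _ _ (hg n)
      obtain ⟨h1, h2⟩ := hτo (pgHist τi τo n) (pgRound τi τo n).1 ⟨p, hpS⟩
      rw [← pgState_eq_curState] at h2
      exact ⟨h1, hlow _ _ _ hpY (h2 p hpS)⟩
    exact ⟨fun n => (hstep n).1, _,
      hwin (pgState q₀ τi τo) rfl (fun n => (hstep n).2), rfl⟩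

/-- in the classical game `P_G` associated with a Hanoi omega-game with a
Rabin winning condition, if Player Out has a winning strategy then she has a
super-memoryless winning strategy: there are linear orders `≤_q` on `Q` (one per state
`q`) such that the strategy moving, from every Player-Out vertex `(q, S)`, to the
`≤_q`-minimal element of `S` is winning. -/
theorem stmt14 {Q Pi Po : Type} [Fintype Q] [Fintype Pi] [Fintype Po] {d : ℕ}
    (A : HOA Q (Pi ⊕ Po) d) (q₀ : Q) (hI : A.I = {q₀}) (hcd : CompleteDet A)
    (CS : Q → Fin d) (hsb : ∀ t ∈ A.Δ, t.color = CS t.src)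
    (pairs : List (Set (Fin d) × Set (Fin d)))
    (hwin : ∃ τo : PGOut Q, PGOutWinning A q₀ CS (RabinAcc pairs) τo) :
    ∃ (r : Q → Q → Q → Prop) (τo : PGOut Q),
      (∀ q : Q, IsLinearOrder Q (r q)) ∧
      (∀ (h : List (Set Q × Q)) (S : Set Q), S.Nonempty →
        τo h S ∈ S ∧ ∀ p ∈ S, r (curState q₀ h) (τo h S) p) ∧
      PGOutWinning A q₀ CS (RabinAcc pairs) τo := by
  have hgood : ∀ q, qGood A q Set.univ := fun q => ⟨fun _ => true, fun vo => by
    obtain ⟨t, ⟨ht, hs, hv⟩, -⟩ := hcd q (Sum.elim (fun _ => true) vo)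
    exact ⟨t.dst, trivial, t, ht, hs, hv, rfl⟩⟩
  -- Good sets are nonempty, so the full state set is a hitting set.
  have hne : ∀ q, (hitting A q).Nonempty := fun q => ⟨Set.univ, fun S ⟨vi, h⟩ => by
    obtain ⟨q', hq', -⟩ := h fun _ => true
    exact ⟨q', trivial, hq'⟩⟩
  obtain ⟨τo, hτ⟩ := hwin
  exact exists_order_of_outMem A q₀ CS pairs
    ((outMem_or_inMem CS pairs (hitting A) hne q₀).resolve_right
      (not_inMem_of_winning A q₀ CS pairs hgood τo hτ))
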